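/- Fix α ∈ (−1,1) and an integer k ≥ 0, and let (R_l)_{l≥0} be real polynomials with deg R_l = l such that ∫_α^1 R_l(z) p(z) (z−α)(1−z²)^k dz = 0 for every polynomial p with deg p < l. Then for all nonnegative integers n, m with |n − m| ≥ 2, ∫_α^1 { R_n(z) R_m(z) · [k(k+1)(z−α) + 2(k+1)z] · (z−α)(1−z²)^k + R_n'(z) R_m'(z) · (z−α)² (1−z²)^{k+1} } dz = 0. (This is the sparsity of the weighted spherical Laplacian operator Δ_W^{(1)}: it is block-diagonal with sub-block bandwidths (2,2), i.e. block-tridiagonal in the degree within each Fourier mode.) -/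

import Mathlib

open MeasureTheory Real Polynomial

/-!
Write `w = (z - α) (1 - z²)^k`, `σ = (z - α) (1 - z²)`, `τ = 2 (1 - z²) - 2 (k + 1) z (z - α)` and
`c = k (k + 1) (z - α) + 2 (k + 1) z`. In the Fourier mode `k`, that is after factoring out
`(1 - z²)^(k/2) e^{ikθ}`, the operator `q ↦ -Δ ((z - α) q)` acts as `L q = c q - σ q'' - τ q'`. By
the Pearson equation `(σ w)' = τ w`, the integral in question is the weak form of `L`: since `σ w`
vanishes at `α` and at `1`, integration by parts turns it into `∫ R_n (L R_m) w`. As `L` raises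
degrees by at most one, this vanishes by orthogonality when `m + 1 < n`, and the weak form is
symmetric in `n` and `m`.
-/

section SturmLiouville

theorem natDegree_mul_iterate_derivative_le {A : Type*} [Semiring A] {s : A[X]} {d j : ℕ}
    (hs : s.natDegree ≤ d + j) (q : A[X]) :
    (s * derivative^[j] q).natDegree ≤ q.natDegree + d := by
  rcases lt_or_ge q.natDegree j with hj | hj
  · simp [iterate_derivative_eq_zero hj]
  · have hmul : (s * derivative^[j] q).natDegree ≤ s.natDegree + (derivative^[j] q).natDegree :=
      natDegree_mul_le
    have hderiv := natDegree_iterate_derivative q j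
    omega

/-- The second-order differential operator `q ↦ c q - (σ q'' + τ q')` on polynomials, i.e. the
strong form of `energyForm` for a weight satisfying the Pearson equation `(σ w)' = τ w`. -/
noncomputable def sturmLiouville {A : Type*} [Ring A] (σ τ c q : A[X]) : A[X] :=
  c * q - (σ * derivative^[2] q + τ * derivative q)

theorem natDegree_sturmLiouville_le {A : Type*} [Ring A] {σ τ c : A[X]} {d : ℕ}
    (hσ : σ.natDegree ≤ d + 2) (hτ : τ.natDegree ≤ d + 1) (hc : c.natDegree ≤ d) (q : A[X]) :
    (sturmLiouville σ τ c q).natDegree ≤ q.natDegree + d :=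
  (natDegree_sub_le_of_le (natDegree_mul_iterate_derivative_le (j := 0) hc q)
    (natDegree_add_le_of_degree_le (natDegree_mul_iterate_derivative_le hσ q)
      (natDegree_mul_iterate_derivative_le (j := 1) hτ q))).trans_eq (max_self _)

end SturmLiouville

section EnergyForm

variable {w : ℝ → ℝ} {σ τ c : ℝ[X]} {a b : ℝ} {d : ℕ}

/-- The bilinear form `∫ (p q c + p' q' σ) w` over `[a, b]` attached to a weight `w`, a leading
coefficient `σ` and a potential `c`. -/
noncomputable def energyForm (w : ℝ → ℝ) (σ c : ℝ[X]) (a b : ℝ) (p q : ℝ[X]) : ℝ :=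
  ∫ z in a..b, (p * q * c + derivative p * derivative q * σ).eval z * w z

theorem energyForm_comm (w : ℝ → ℝ) (σ c : ℝ[X]) (a b : ℝ) (p q : ℝ[X]) :
    energyForm w σ c a b p q = energyForm w σ c a b q p := by
  simp only [energyForm, mul_comm p, mul_comm (derivative p)]

/-- An integrable weight `w` between `a` and `b` satisfying the Pearson equation `(σ w)' = τ w` in
the interior, with `σ w` continuous up to the endpoints and vanishing there. The order of `a` and
`b` is not prescribed. -/
structure IsPearsonWeight (w : ℝ → ℝ) (σ τ : ℝ[X]) (a b : ℝ) : Prop where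
  intervalIntegrable : IntervalIntegrable w volume a b
  continuousOn : ContinuousOn (fun z ↦ σ.eval z * w z) (Set.uIcc a b)
  hasDerivAt : ∀ z ∈ Set.Ioo (min a b) (max a b),
    HasDerivAt (fun z ↦ σ.eval z * w z) (τ.eval z * w z) z
  left_eq_zero : σ.eval a * w a = 0
  right_eq_zero : σ.eval b * w b = 0

namespace IsPearsonWeight

theorem of_polynomial {W : ℝ[X]} (hderiv : derivative (σ * W) = τ * W)
    (ha : (σ * W).IsRoot a) (hb : (σ * W).IsRoot b) :
    IsPearsonWeight (fun z ↦ W.eval z) σ τ a b where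
  intervalIntegrable := W.continuous.intervalIntegrable a b
  continuousOn := by fun_prop
  hasDerivAt z _ := by simpa only [hderiv, eval_mul] using (σ * W).hasDerivAt z
  left_eq_zero := by simpa only [eval_mul] using ha.eq_zero
  right_eq_zero := by simpa only [eval_mul] using hb.eq_zero

theorem intervalIntegrable_eval_mul (h : IsPearsonWeight w σ τ a b) (p : ℝ[X]) :
    IntervalIntegrable (fun z ↦ p.eval z * w z) volume a b :=
  h.intervalIntegrable.continuousOn_mul p.continuousOn

theorem integral_derivative_mul (h : IsPearsonWeight w σ τ a b) (p q : ℝ[X]) :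
    ∫ z in a..b, (derivative p * q * σ).eval z * w z =
      -∫ z in a..b, (p * (derivative q * σ + q * τ)).eval z * w z := by
  have hq : ∀ z ∈ Set.Ioo (min a b) (max a b), HasDerivAt (fun z ↦ q.eval z * (σ.eval z * w z))
      ((derivative q * σ + q * τ).eval z * w z) z := fun z hz ↦ by
    refine ((q.hasDerivAt z).mul (h.hasDerivAt z hz)).congr_deriv ?_
    simp only [eval_add, eval_mul]
    ring
  have hparts := intervalIntegral.integral_mul_deriv_eq_deriv_mul_of_hasDerivAt
    p.continuousOn (q.continuousOn.mul h.continuousOn) (fun z _ ↦ p.hasDerivAt z) hq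
    ((derivative p).continuous.intervalIntegrable a b) (h.intervalIntegrable_eval_mul _)
  simp only [Pi.mul_apply, h.left_eq_zero, h.right_eq_zero, mul_zero, sub_zero, zero_sub] at hparts
  simp only [eval_mul, mul_assoc] at hparts ⊢
  rw [hparts, neg_neg]

theorem energyForm_eq_integral_mul_sturmLiouville (h : IsPearsonWeight w σ τ a b)
    (c p q : ℝ[X]) :
    energyForm w σ c a b p q = ∫ z in a..b, p.eval z * (sturmLiouville σ τ c q).eval z * w z := by
  simp only [energyForm, eval_add, add_mul]
  rw [intervalIntegral.integral_add (h.intervalIntegrable_eval_mul _)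
      (h.intervalIntegrable_eval_mul _), h.integral_derivative_mul, ← sub_eq_add_neg,
    ← intervalIntegral.integral_sub (h.intervalIntegrable_eval_mul _)
      (h.intervalIntegrable_eval_mul _)]
  refine intervalIntegral.integral_congr fun z _ ↦ ?_
  simp only [sturmLiouville, Function.iterate_succ_apply, Function.iterate_zero_apply, eval_add,
    eval_sub, eval_mul]
  ring

theorem energyForm_eq_zero_of_natDegree_add_lt (h : IsPearsonWeight w σ τ a b)
    (hσ : σ.natDegree ≤ d + 2) (hτ : τ.natDegree ≤ d + 1) (hc : c.natDegree ≤ d)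
    {n : ℕ} {p q : ℝ[X]}
    (horth : ∀ r : ℝ[X], r.degree < n → ∫ z in a..b, p.eval z * r.eval z * w z = 0)
    (hq : q.natDegree + d < n) : energyForm w σ c a b p q = 0 := by
  rw [h.energyForm_eq_integral_mul_sturmLiouville]
  have hdeg := (natDegree_sturmLiouville_le hσ hτ hc q).trans_lt hq
  exact horth _ (degree_le_natDegree.trans_lt (WithBot.coe_lt_coe.2 hdeg))

theorem energyForm_eq_zero_of_lt_abs_sub (h : IsPearsonWeight w σ τ a b)
    (hσ : σ.natDegree ≤ d + 2) (hτ : τ.natDegree ≤ d + 1) (hc : c.natDegree ≤ d)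
    {R : ℕ → ℝ[X]} (hdeg : ∀ l, (R l).natDegree ≤ l)
    (horth : ∀ (l : ℕ) (r : ℝ[X]), r.degree < l →
      ∫ z in a..b, (R l).eval z * r.eval z * w z = 0)
    {n m : ℕ} (hnm : (d : ℤ) < |(n : ℤ) - m|) : energyForm w σ c a b (R n) (R m) = 0 := by
  have vanishing : ∀ i j : ℕ, j + d < i → energyForm w σ c a b (R i) (R j) = 0 := fun i j hij ↦
    h.energyForm_eq_zero_of_natDegree_add_lt hσ hτ hc (horth i)
      ((Nat.add_le_add_right (hdeg j) d).trans_lt hij)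
  rcases lt_abs.1 hnm with hlt | hlt
  · exact vanishing n m (by omega)
  · rw [energyForm_comm]
    exact vanishing m n (by omega)

end IsPearsonWeight

end EnergyForm

section SphericalCap

/-- The weight `(z - α) (1 - z²)^k` of the spherical cap in the Fourier mode `k`. -/
noncomputable def capWeight (α : ℝ) (k : ℕ) : ℝ[X] := (X - C α) * (1 - X ^ 2) ^ k

/-- The coefficient of `q''` in the spherical Laplacian of `(z - α) q`, the same in every
Fourier mode. -/
noncomputable def capLeadingCoeff (α : ℝ) : ℝ[X] := (X - C α) * (1 - X ^ 2)

/-- The coefficient of `q'` in the spherical Laplacian of `(z - α) q` in the Fourier mode `k`. -/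
noncomputable def capDrift (α : ℝ) (k : ℕ) : ℝ[X] :=
  C 2 * (1 - X ^ 2) - C (2 * ((k : ℝ) + 1)) * X * (X - C α)

/-- The negated coefficient of `q` in the spherical Laplacian of `(z - α) q` in the Fourier
mode `k`. -/
noncomputable def capPotential (α : ℝ) (k : ℕ) : ℝ[X] :=
  C ((k : ℝ) * ((k : ℝ) + 1)) * (X - C α) + C (2 * ((k : ℝ) + 1)) * X

variable (α : ℝ) (k : ℕ)

theorem natDegree_capLeadingCoeff_le : (capLeadingCoeff α).natDegree ≤ 3 := by
  rw [capLeadingCoeff]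
  compute_degree

theorem natDegree_capDrift_le : (capDrift α k).natDegree ≤ 2 := by
  rw [capDrift]
  compute_degree

theorem natDegree_capPotential_le : (capPotential α k).natDegree ≤ 1 := by
  rw [capPotential]
  compute_degree

theorem derivative_capLeadingCoeff_mul_capWeight :
    derivative (capLeadingCoeff α * capWeight α k) = capDrift α k * capWeight α k := by
  have hprod : capLeadingCoeff α * capWeight α k = (X - C α) ^ 2 * (1 - X ^ 2) ^ (k + 1) := by
    rw [capLeadingCoeff, capWeight]
    ring
  rw [hprod, capDrift, capWeight]
  simp only [derivative_mul, derivative_pow, derivative_sub, derivative_one, derivative_X,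
    derivative_C, map_mul, map_add, map_natCast, map_ofNat, map_one, Nat.add_sub_cancel]
  push_cast
  ring

theorem isPearsonWeight_capWeight :
    IsPearsonWeight (fun z ↦ (capWeight α k).eval z) (capLeadingCoeff α) (capDrift α k) α 1 :=
  .of_polynomial (derivative_capLeadingCoeff_mul_capWeight α k)
    (by simp [capLeadingCoeff]) (by simp [capLeadingCoeff])

theorem energyForm_capWeight (p q : ℝ[X]) :
    energyForm (fun z ↦ (capWeight α k).eval z) (capLeadingCoeff α) (capPotential α k) α 1 p q =
      ∫ z in α..1,
        (p.eval z * q.eval z *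
            ((k : ℝ) * ((k : ℝ) + 1) * (z - α) + 2 * ((k : ℝ) + 1) * z) *
            (z - α) * (1 - z ^ 2) ^ k
          + (derivative p).eval z * (derivative q).eval z *
            (z - α) ^ 2 * (1 - z ^ 2) ^ (k + 1)) := by
  refine intervalIntegral.integral_congr fun z _ ↦ ?_
  simp only [capWeight, capLeadingCoeff, capPotential, eval_add, eval_sub, eval_mul, eval_pow,
    eval_X, eval_C, eval_one]
  ring

end SphericalCap

theorem sphericalCap_DeltaW1_sparse_general (α : ℝ) (k : ℕ)
    (R : ℕ → Polynomial ℝ) (hdeg : ∀ l : ℕ, (R l).natDegree ≤ l)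
    (horth : ∀ (l : ℕ) (p : Polynomial ℝ), p.degree < (l : WithBot ℕ) →
      ∫ z in α..1, (R l).eval z * p.eval z * (z - α) * (1 - z ^ 2) ^ k = 0)
    (n m : ℕ) (hnm : 2 ≤ |(n : ℤ) - (m : ℤ)|) :
    ∫ z in α..1,
      ((R n).eval z * (R m).eval z *
          ((k : ℝ) * ((k : ℝ) + 1) * (z - α) + 2 * ((k : ℝ) + 1) * z) *
          (z - α) * (1 - z ^ 2) ^ k
        + (derivative (R n)).eval z * (derivative (R m)).eval z *
          (z - α) ^ 2 * (1 - z ^ 2) ^ (k + 1)) = 0 := by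
  rw [← energyForm_capWeight]
  have horth' : ∀ (l : ℕ) (p : ℝ[X]), p.degree < l →
      ∫ z in α..1, (R l).eval z * p.eval z * (capWeight α k).eval z = 0 := fun l p hp ↦ by
    simpa [capWeight, ← mul_assoc] using horth l p hp
  exact (isPearsonWeight_capWeight α k).energyForm_eq_zero_of_lt_abs_sub (d := 1)
    (natDegree_capLeadingCoeff_le α) (natDegree_capDrift_le α k) (natDegree_capPotential_le α k)
    hdeg horth' hnm

/-- Sparsity of the weighted spherical Laplacian operator Δ_W^{(1)}: within each Fourier
mode k it is block-tridiagonal in the degree, i.e. the coupling integral between the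
degree-n and degree-m orthogonal polynomials for the weight (z−α)(1−z²)^k vanishes
whenever |n − m| ≥ 2. -/
theorem sphericalCap_DeltaW1_sparse (α : ℝ) (hα : α ∈ Set.Ioo (-1 : ℝ) 1) (k : ℕ)
    (R : ℕ → Polynomial ℝ) (hdeg : ∀ l : ℕ, (R l).degree = l)
    (horth : ∀ (l : ℕ) (p : Polynomial ℝ), p.degree < (l : WithBot ℕ) →
      ∫ z in α..1, (R l).eval z * p.eval z * (z - α) * (1 - z ^ 2) ^ k = 0)
    (n m : ℕ) (hnm : 2 ≤ |(n : ℤ) - (m : ℤ)|) :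
    ∫ z in α..1,
      ((R n).eval z * (R m).eval z *
          ((k : ℝ) * ((k : ℝ) + 1) * (z - α) + 2 * ((k : ℝ) + 1) * z) *
          (z - α) * (1 - z ^ 2) ^ k
        + (derivative (R n)).eval z * (derivative (R m)).eval z *
          (z - α) ^ 2 * (1 - z ^ 2) ^ (k + 1)) = 0 :=
  sphericalCap_DeltaW1_sparse_general α k R (fun l ↦ natDegree_le_of_degree_le (hdeg l).le)
    horth n m hnm
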